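/- Let n ≥ 3, let B be the open unit ball of ℝⁿ, let ωₙ be the Lebesgue measure of B, and for x, y ∈ B with x ≠ y define G(x, y) = (1/(n(n−2)ωₙ)) [ |x−y|^{2−n} − (|x|²|y|² + 1 − 2⟨x,y⟩)^{(2−n)/2} ]. Then for every x ∈ B, ∫_B G(x, y) dy = (1 − |x|²)/(2n). -/

import Mathlib

open MeasureTheory Metric Real
open scoped RealInnerProductSpace

/-- `ωₙ`: the Lebesgue volume of the open unit ball of `ℝⁿ`. -/
noncomputable def unitBallVol (n : ℕ) : ℝ :=
  (volume (ball (0 : EuclideanSpace ℝ (Fin n)) 1)).toReal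

/-- The Green function of the Laplacian on the unit ball of `ℝⁿ` with Dirichlet
boundary condition. -/
noncomputable def greenFn (n : ℕ) (x y : EuclideanSpace ℝ (Fin n)) : ℝ :=
  (1 / (n * ((n : ℝ) - 2) * unitBallVol n)) *
    (‖x - y‖ ^ ((2 : ℝ) - n) -
      (‖x‖ ^ 2 * ‖y‖ ^ 2 + 1 - 2 * ⟪x, y⟫) ^ (((2 : ℝ) - n) / 2))

/-!
Replacing `‖x - y‖²` and `‖x‖²‖y‖² + 1 - 2⟪x, y⟫` by themselves plus `ε > 0` makes both kernels
smooth without destroying their equality on the unit sphere. Green's second identity of the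
regularised Green function against `1 - ‖y‖²`, which also vanishes on the sphere and whose Laplacian
is the constant `-2n`, expresses the integral of the former through its Laplacian. Up to the factor
`-n(n - 2)`, that Laplacian is `ε (‖x - y‖² + ε)^{-(n/2 + 1)}`, an approximate identity at `x` of
total mass `ωₙ`, minus a term of size `O(ε)`. Letting `ε → 0` evaluates `1 - ‖y‖²` at `x`.
-/

open Bornology Filter InnerProductSpace Module Set Topology
open scoped Gradient Laplacian

section DivergenceTheorem

variable {E : Type*} [NormedAddCommGroup E] [NormedSpace ℝ E]

lemma lipschitzWith_indicator_of_eqOn_frontier_zero [FiniteDimensional ℝ E]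
    {F : Type*} [SeminormedAddCommGroup F] {f : E → F} {s : Set E} {K : NNReal}
    (hf : LipschitzOnWith K f (closure s)) (hf₀ : EqOn f 0 (frontier s)) :
    LipschitzWith K (s.indicator f) := by
  have norm_le_of_mem_of_notMem {y z : E} (hy : y ∈ s) (hz : z ∉ s) : ‖f y‖ ≤ K * dist y z := by
    obtain ⟨b, hb, hyb⟩ :=
      exists_mem_frontier_infDist_compl_eq_dist hy (ne_univ_iff_exists_notMem s |>.2 ⟨z, hz⟩)
    calc
      ‖f y‖ = dist (f y) (f b) := by rw [hf₀ hb, Pi.zero_apply, dist_zero_right]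
      _ ≤ K * dist y b := hf.dist_le_mul _ (subset_closure hy) _ (frontier_subset_closure hb)
      _ ≤ K * dist y z := by rw [← hyb]; gcongr; exact infDist_le_dist_of_mem hz
  refine LipschitzWith.of_dist_le_mul fun y z ↦ ?_
  by_cases hy : y ∈ s <;> by_cases hz : z ∈ s
  · simpa only [indicator_of_mem hy, indicator_of_mem hz] using
      hf.dist_le_mul _ (subset_closure hy) _ (subset_closure hz)
  · simpa only [indicator_of_mem hy, indicator_of_notMem hz, dist_zero_right] using
      norm_le_of_mem_of_notMem hy hz
  · simpa only [indicator_of_notMem hy, indicator_of_mem hz, dist_zero_left, dist_comm y] using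
      norm_le_of_mem_of_notMem hz hy
  · simpa only [indicator_of_notMem hy, indicator_of_notMem hz, dist_self] using by positivity

lemma lineDeriv_indicator_of_notMem_frontier {F : Type*} [NormedAddCommGroup F] [NormedSpace ℝ F]
    (f : E → F) {s : Set E} {y : E} (hy : y ∉ frontier s) (v : E) :
    lineDeriv ℝ (s.indicator f) y v = s.indicator (fun z ↦ lineDeriv ℝ f z v) y := by
  by_cases hys : y ∈ s
  · have hnhds : s ∈ 𝓝 y := by
      rw [mem_frontier_iff_notMem_interior hys, not_not] at hy
      exact mem_interior_iff_mem_nhds.1 hy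
    rw [indicator_of_mem hys, Filter.EventuallyEq.lineDeriv_eq]
    filter_upwards [hnhds] with z hz using indicator_of_mem hz f
  · have hnhds : sᶜ ∈ 𝓝 y := by
      rw [← frontier_compl, mem_frontier_iff_notMem_interior hys, not_not] at hy
      exact mem_interior_iff_mem_nhds.1 hy
    have hzero : s.indicator f =ᶠ[𝓝 y] fun _ ↦ 0 := by
      filter_upwards [hnhds] with z hz using indicator_of_notMem hz f
    rw [indicator_of_notMem hys, hzero.lineDeriv_eq]
    exact deriv_const _ _

variable [FiniteDimensional ℝ E] [MeasurableSpace E] [BorelSpace E]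

lemma setIntegral_fderiv_eq_zero_of_eqOn_frontier_zero
    {μ : Measure E} [μ.IsAddHaarMeasure] {s : Set E} (hs : IsBounded s) (hμ : μ (frontier s) = 0)
    {f : E → ℝ} (hf : ContDiff ℝ 1 f) (hf₀ : EqOn f 0 (frontier s)) (v : E) :
    ∫ y in s, fderiv ℝ f y v ∂μ = 0 := by
  obtain ⟨R, hR⟩ := hs.closure.subset_closedBall 0
  obtain ⟨K, hK⟩ := hf.contDiffOn.exists_lipschitzOnWith one_ne_zero
    (convex_closedBall (0 : E) R) (isCompact_closedBall 0 R)
  have hlip : LipschitzWith K (s.indicator f) :=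
    lipschitzWith_indicator_of_eqOn_frontier_zero (hK.mono hR) hf₀
  have hsupp : HasCompactSupport (s.indicator f) :=
    hs.isCompact_closure.of_isClosed_subset (isClosed_tsupport _)
      (closure_mono support_indicator_subset)
  have hparts := (LipschitzWith.const (1 : ℝ)).integral_lineDeriv_mul_eq (μ := μ) hlip hsupp (-v)
  have hconst (y : E) : lineDeriv ℝ (fun _ : E ↦ (1 : ℝ)) y (-v) = 0 := deriv_const _ _
  simp only [hconst, zero_mul, integral_zero, neg_neg, mul_one] at hparts
  rw [hparts, ← integral_indicator₀ (nullMeasurableSet_of_null_frontier hμ)]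
  refine integral_congr_ae ?_
  filter_upwards [measure_eq_zero_iff_ae_notMem.1 hμ] with y hy
  simp only [lineDeriv_indicator_of_notMem_frontier f hy,
    ((hf.differentiable one_ne_zero) _).lineDeriv_eq_fderiv]

end DivergenceTheorem

section IntegrableOn

variable {E F : Type*} [MetricSpace E] [ProperSpace E] [MeasurableSpace E]
  [OpensMeasurableSpace E] [NormedAddCommGroup F]

lemma integrableOn_of_isBounded_of_continuousOn_closure {μ : Measure E}
    [IsFiniteMeasureOnCompacts μ] {f : E → F} {s : Set E} (hs : IsBounded s)
    (hf : ContinuousOn f (closure s)) : IntegrableOn f s μ :=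
  (hf.integrableOn_compact hs.isCompact_closure).mono_set subset_closure

end IntegrableOn

section Laplacian

variable {E : Type*} [NormedAddCommGroup E] [InnerProductSpace ℝ E]

lemma contDiff_fderiv_apply_const {f : E → ℝ} (hf : ContDiff ℝ 2 f) (v : E) :
    ContDiff ℝ 1 (fun z ↦ fderiv ℝ f z v) :=
  (hf.fderiv_right (by norm_num)).clm_apply contDiff_const

lemma fderiv_mul_fderiv_apply_sub_mul_fderiv_apply {f g : E → ℝ} (hf : ContDiff ℝ 2 f)
    (hg : ContDiff ℝ 2 g) (v y : E) :
    fderiv ℝ (fun z ↦ f z * fderiv ℝ g z v - g z * fderiv ℝ f z v) y v =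
      f y * fderiv ℝ (fun z ↦ fderiv ℝ g z v) y v -
        g y * fderiv ℝ (fun z ↦ fderiv ℝ f z v) y v := by
  have hf' := (hf.differentiable two_ne_zero y).hasFDerivAt
  have hg' := (hg.differentiable two_ne_zero y).hasFDerivAt
  have hfv := ((contDiff_fderiv_apply_const hf v).differentiable one_ne_zero y).hasFDerivAt
  have hgv := ((contDiff_fderiv_apply_const hg v).differentiable one_ne_zero y).hasFDerivAt
  rw [((hf'.fun_mul hgv).fun_sub (hg'.fun_mul hfv)).fderiv]
  simp only [sub_apply, add_apply, smul_apply, smul_eq_mul]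
  ring

variable [FiniteDimensional ℝ E] {f g : E → ℝ}

lemma laplacian_eq_sum_fderiv {ι : Type*} [Fintype ι] (b : OrthonormalBasis ι ℝ E)
    (hf : ContDiff ℝ 2 f) (y : E) :
    Δ f y = ∑ i, fderiv ℝ (fun z ↦ fderiv ℝ f z (b i)) y (b i) := by
  have hf' : DifferentiableAt ℝ (fderiv ℝ f) y :=
    ((hf.fderiv_right (m := 1) (by norm_num)).differentiable one_ne_zero) y
  simp [laplacian_eq_iteratedFDeriv_orthonormalBasis f b, iteratedFDeriv_two_apply,
    fderiv_clm_apply hf' (differentiableAt_const _)]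

lemma continuous_laplacian (hf : ContDiff ℝ 2 f) : Continuous (Δ f) := by
  rw [funext (laplacian_eq_sum_fderiv (stdOrthonormalBasis ℝ E) hf)]
  exact continuous_finsetSum _ fun i _ ↦
    ((contDiff_fderiv_apply_const hf _).continuous_fderiv one_ne_zero).clm_apply continuous_const

lemma laplacian_rpow (hf : ContDiff ℝ 2 f) (hpos : ∀ y, 0 < f y) (p : ℝ) (y : E) :
    Δ (fun z ↦ f z ^ p) y =
      p * (p - 1) * f y ^ (p - 2) * ‖∇ f y‖ ^ 2 + p * f y ^ (p - 1) * Δ f y := by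
  have hasFDerivAt_rpow (s : ℝ) (z : E) :
      HasFDerivAt (fun z ↦ f z ^ s) ((s * f z ^ (s - 1)) • fderiv ℝ f z) z :=
    ((hf.differentiable two_ne_zero) z).hasFDerivAt.rpow_const (.inl (hpos z).ne')
  have hfp : ContDiff ℝ 2 fun z ↦ f z ^ p := hf.rpow_const_of_ne fun z ↦ (hpos z).ne'
  have second_deriv (v : E) : fderiv ℝ (fun z ↦ fderiv ℝ (fun z ↦ f z ^ p) z v) y v =
      p * (p - 1) * f y ^ (p - 2) * fderiv ℝ f y v ^ 2 +
        p * f y ^ (p - 1) * fderiv ℝ (fun z ↦ fderiv ℝ f z v) y v := by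
    have hfv := ((contDiff_fderiv_apply_const hf v).differentiable one_ne_zero) y |>.hasFDerivAt
    have hprod := ((hasFDerivAt_rpow (p - 1) y).const_mul p).fun_mul hfv
    simp only [(hasFDerivAt_rpow p _).fderiv, smul_apply, smul_eq_mul]
    rw [hprod.fderiv, show p - 1 - 1 = p - 2 by ring]
    simp only [add_apply, smul_apply, smul_eq_mul]
    ring
  set b := stdOrthonormalBasis ℝ E
  simp_rw [laplacian_eq_sum_fderiv b hfp, second_deriv, Finset.sum_add_distrib, ← Finset.mul_sum,
    ← laplacian_eq_sum_fderiv b hf, ← inner_gradient_left, b.sum_sq_inner_left]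

variable [MeasurableSpace E] [BorelSpace E]

lemma setIntegral_mul_laplacian_comm {μ : Measure E} [μ.IsAddHaarMeasure] {s : Set E}
    (hs : IsBounded s) (hμ : μ (frontier s) = 0) (hf : ContDiff ℝ 2 f) (hg : ContDiff ℝ 2 g)
    (hf₀ : EqOn f 0 (frontier s)) (hg₀ : EqOn g 0 (frontier s)) :
    ∫ y in s, f y * Δ g y ∂μ = ∫ y in s, g y * Δ f y ∂μ := by
  set b := stdOrthonormalBasis ℝ E
  let V (v z : E) : ℝ := f z * fderiv ℝ g z v - g z * fderiv ℝ f z v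
  have hV (v : E) : ContDiff ℝ 1 (V v) :=
    ((hf.of_le one_le_two).mul (contDiff_fderiv_apply_const hg v)).sub
      ((hg.of_le one_le_two).mul (contDiff_fderiv_apply_const hf v))
  have hV₀ (v : E) : EqOn (V v) 0 (frontier s) := fun z hz ↦ by simp [V, hf₀ hz, hg₀ hz]
  have div_V (y : E) : f y * Δ g y - g y * Δ f y = ∑ i, fderiv ℝ (V (b i)) y (b i) := by
    simp_rw [V, fderiv_mul_fderiv_apply_sub_mul_fderiv_apply hf hg, Finset.sum_sub_distrib,
      ← Finset.mul_sum, laplacian_eq_sum_fderiv b hf, laplacian_eq_sum_fderiv b hg]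
  have integrableOn {h : E → ℝ} (hh : Continuous h) : IntegrableOn h s μ :=
    integrableOn_of_isBounded_of_continuousOn_closure hs hh.continuousOn
  rw [← sub_eq_zero,
    ← integral_sub
      (integrableOn (h := fun y ↦ f y * Δ g y) (hf.continuous.mul (continuous_laplacian hg)))
      (integrableOn (h := fun y ↦ g y * Δ f y) (hg.continuous.mul (continuous_laplacian hf)))]
  simp_rw [div_V]
  rw [integral_finsetSum _ fun i _ ↦ integrableOn
    (((hV (b i)).continuous_fderiv one_ne_zero).clm_apply continuous_const)]
  exact Finset.sum_eq_zero fun i _ ↦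
    setIntegral_fderiv_eq_zero_of_eqOn_frontier_zero hs hμ (hV _) (hV₀ _) _

end Laplacian

section IsotropicQuadratic

variable {E : Type*} [NormedAddCommGroup E] [InnerProductSpace ℝ E]

/-- The quadratic polynomial `y ↦ α‖y‖² + γ - 2⟪x, y⟫`. Both kernels in the Green function of the
unit ball are powers of such a polynomial: `(α, γ) = (1, ‖x‖²)` gives `‖x - y‖²`, and
`(α, γ) = (‖x‖², 1)` gives the squared distance from `y` to the Kelvin image of `x`, scaled
by `‖x‖²`. -/
noncomputable def isotropicQuadratic (α γ : ℝ) (x y : E) : ℝ :=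
  α * ‖y‖ ^ 2 + γ - 2 * ⟪x, y⟫

variable (α γ ε : ℝ) (x y : E)

lemma isotropicQuadratic_add_const :
    isotropicQuadratic α (γ + ε) x y = isotropicQuadratic α γ x y + ε := by
  unfold isotropicQuadratic
  ring

lemma isotropicQuadratic_one_norm_sq : isotropicQuadratic 1 (‖x‖ ^ 2) x y = ‖x - y‖ ^ 2 := by
  rw [isotropicQuadratic, norm_sub_sq_real]
  ring

variable {α γ x y} in
lemma isotropicQuadratic_eq_of_norm_eq_one {α' γ' : ℝ} (hsum : α + γ = α' + γ') (hy : ‖y‖ = 1) :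
    isotropicQuadratic α γ x y = isotropicQuadratic α' γ' x y := by
  simp only [isotropicQuadratic, hy, one_pow, mul_one, hsum]

lemma sq_one_sub_norm_mul_norm_le_isotropicQuadratic :
    (1 - ‖x‖ * ‖y‖) ^ 2 ≤ isotropicQuadratic (‖x‖ ^ 2) 1 x y := by
  unfold isotropicQuadratic
  linarith [real_inner_le_norm x y]

variable {x y} in
lemma isotropicQuadratic_norm_sq_one_pos (hx : ‖x‖ < 1) (hy : ‖y‖ ≤ 1) :
    0 < isotropicQuadratic (‖x‖ ^ 2) 1 x y := by
  have hxy : ‖x‖ * ‖y‖ < 1 := (mul_le_of_le_one_right (norm_nonneg x) hy).trans_lt hx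
  exact (pow_pos (sub_pos.2 hxy) 2).trans_le (sq_one_sub_norm_mul_norm_le_isotropicQuadratic x y)

lemma contDiff_isotropicQuadratic {n : WithTop ℕ∞} : ContDiff ℝ n (isotropicQuadratic α γ x) := by
  unfold isotropicQuadratic
  exact ((contDiff_const.mul (contDiff_norm_sq ℝ)).add contDiff_const).sub
    (contDiff_const.mul (contDiff_const.inner ℝ contDiff_id))

variable {α γ x} in
lemma contDiff_isotropicQuadratic_rpow {n : WithTop ℕ∞}
    (hpos : ∀ z, 0 < isotropicQuadratic α γ x z) (p : ℝ) :
    ContDiff ℝ n fun z ↦ isotropicQuadratic α γ x z ^ p :=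
  (contDiff_isotropicQuadratic α γ x).rpow_const_of_ne fun z ↦ (hpos z).ne'

lemma fderiv_isotropicQuadratic_apply (v : E) :
    fderiv ℝ (isotropicQuadratic α γ x) y v = ⟪(2 : ℝ) • (α • y - x), v⟫ := by
  have hsq : HasFDerivAt (fun z : E ↦ ‖z‖ ^ 2) (2 • innerSL ℝ y) y :=
    (hasStrictFDerivAt_norm_sq y).hasFDerivAt
  have hfderiv := ((hsq.const_mul α).add_const γ).fun_sub
    ((innerSL ℝ x).hasFDerivAt.const_mul 2)
  rw [show fderiv ℝ (isotropicQuadratic α γ x) y = _ from hfderiv.fderiv]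
  simp [inner_sub_left, inner_smul_left]
  ring

variable [FiniteDimensional ℝ E]

lemma gradient_isotropicQuadratic : ∇ (isotropicQuadratic α γ x) y = (2 : ℝ) • (α • y - x) :=
  ext_inner_right ℝ fun v ↦ by
    rw [inner_gradient_left, fderiv_isotropicQuadratic_apply]

lemma norm_gradient_isotropicQuadratic_sq :
    ‖∇ (isotropicQuadratic α γ x) y‖ ^ 2 =
      4 * (α * isotropicQuadratic α γ x y - (α * γ - ‖x‖ ^ 2)) := by
  rw [gradient_isotropicQuadratic, norm_smul, mul_pow, norm_sub_sq_real, norm_smul,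
    real_inner_smul_left, real_inner_comm, mul_pow, norm_eq_abs, norm_eq_abs, sq_abs, sq_abs,
    isotropicQuadratic]
  ring

lemma laplacian_isotropicQuadratic :
    Δ (isotropicQuadratic α γ x) y = 2 * α * finrank ℝ E := by
  have second_deriv (v : E) :
      fderiv ℝ (fun z ↦ fderiv ℝ (isotropicQuadratic α γ x) z v) y v = 2 * α * ‖v‖ ^ 2 := by
    have hinner : HasFDerivAt (fun z : E ↦ ⟪(2 : ℝ) • (α • z - x), v⟫) _ y :=
      ((((hasFDerivAt_id y).const_smul α).sub_const x).const_smul (2 : ℝ)).inner ℝ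
        (hasFDerivAt_const v y)
    simp_rw [fderiv_isotropicQuadratic_apply]
    rw [hinner.fderiv]
    simp [inner_smul_left, mul_assoc]
  set b := stdOrthonormalBasis ℝ E
  simp_rw [laplacian_eq_sum_fderiv b (contDiff_isotropicQuadratic α γ x), second_deriv,
    b.norm_eq_one]
  simp [mul_comm]

lemma laplacian_isotropicQuadratic_rpow (hpos : ∀ z, 0 < isotropicQuadratic α γ x z) :
    Δ (fun z ↦ isotropicQuadratic α γ x z ^ ((2 - finrank ℝ E : ℝ) / 2)) y =
      -(finrank ℝ E * (finrank ℝ E - 2) * (α * γ - ‖x‖ ^ 2) *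
        isotropicQuadratic α γ x y ^ (-(finrank ℝ E / 2 + 1 : ℝ))) := by
  set d := (finrank ℝ E : ℝ)
  have hexp : (2 - d) / 2 - 2 = -(d / 2 + 1) := by ring
  have hpow : isotropicQuadratic α γ x y ^ ((2 - d) / 2 - 1) =
      isotropicQuadratic α γ x y ^ (-(d / 2 + 1)) * isotropicQuadratic α γ x y := by
    rw [← rpow_add_one (hpos y).ne', ← hexp]
    ring_nf
  rw [laplacian_rpow (contDiff_isotropicQuadratic α γ x) hpos,
    norm_gradient_isotropicQuadratic_sq, laplacian_isotropicQuadratic, hpow, hexp]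
  ring

end IsotropicQuadratic

section GreenIdentity

variable {E : Type*} [NormedAddCommGroup E] [InnerProductSpace ℝ E] [FiniteDimensional ℝ E]

lemma laplacian_one_sub_norm_sq (y : E) :
    Δ (fun z : E ↦ (1 - ‖z‖ ^ 2 : ℝ)) y = -(2 * finrank ℝ E) := by
  have hquad : (fun z : E ↦ (1 : ℝ) - ‖z‖ ^ 2) = isotropicQuadratic (-1) 1 0 := by
    funext z
    simp only [isotropicQuadratic, inner_zero_left]
    ring
  rw [hquad, laplacian_isotropicQuadratic]
  ring

lemma laplacian_isotropicQuadratic_rpow_sub {α γ α' γ' : ℝ} (x y : E)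
    (hpos : ∀ z, 0 < isotropicQuadratic α γ x z)
    (hpos' : ∀ z, 0 < isotropicQuadratic α' γ' x z) :
    Δ (fun z ↦ isotropicQuadratic α γ x z ^ ((2 - finrank ℝ E : ℝ) / 2) -
        isotropicQuadratic α' γ' x z ^ ((2 - finrank ℝ E : ℝ) / 2)) y =
      -(finrank ℝ E * (finrank ℝ E - 2)) *
        ((α * γ - ‖x‖ ^ 2) * isotropicQuadratic α γ x y ^ (-(finrank ℝ E / 2 + 1 : ℝ)) -
          (α' * γ' - ‖x‖ ^ 2) *
            isotropicQuadratic α' γ' x y ^ (-(finrank ℝ E / 2 + 1 : ℝ))) := by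
  refine ((contDiff_isotropicQuadratic_rpow hpos _).contDiffAt.laplacian_sub
    (contDiff_isotropicQuadratic_rpow hpos' _).contDiffAt).trans ?_
  rw [laplacian_isotropicQuadratic_rpow _ _ _ _ hpos,
    laplacian_isotropicQuadratic_rpow _ _ _ _ hpos']
  ring

variable [Nontrivial E] [MeasurableSpace E] [BorelSpace E]

lemma setIntegral_ball_isotropicQuadratic_rpow_sub {μ : Measure E} [μ.IsAddHaarMeasure]
    {α γ α' γ' : ℝ} (x : E) (hsum : α + γ = α' + γ') (hpos : ∀ y, 0 < isotropicQuadratic α γ x y)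
    (hpos' : ∀ y, 0 < isotropicQuadratic α' γ' x y) :
    ∫ y in ball (0 : E) 1, (isotropicQuadratic α γ x y ^ ((2 - finrank ℝ E : ℝ) / 2) -
        isotropicQuadratic α' γ' x y ^ ((2 - finrank ℝ E : ℝ) / 2)) ∂μ =
      (finrank ℝ E - 2 : ℝ) / 2 * ∫ y in ball (0 : E) 1, (1 - ‖y‖ ^ 2) *
        ((α * γ - ‖x‖ ^ 2) * isotropicQuadratic α γ x y ^ (-(finrank ℝ E / 2 + 1 : ℝ)) -
          (α' * γ' - ‖x‖ ^ 2) *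
            isotropicQuadratic α' γ' x y ^ (-(finrank ℝ E / 2 + 1 : ℝ))) ∂μ := by
  set d := (finrank ℝ E : ℝ)
  have hd : d ≠ 0 := Nat.cast_ne_zero.2 finrank_pos.ne'
  have hw : ContDiff ℝ 2 fun y : E ↦ (1 : ℝ) - ‖y‖ ^ 2 := contDiff_const.sub (contDiff_norm_sq ℝ)
  have norm_eq_one {y : E} (hy : y ∈ frontier (ball (0 : E) 1)) : ‖y‖ = 1 := by
    simpa only [frontier_ball (0 : E) one_ne_zero, mem_sphere_zero_iff_norm] using hy
  have boundary : EqOn (fun y ↦ isotropicQuadratic α γ x y ^ ((2 - d) / 2) -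
      isotropicQuadratic α' γ' x y ^ ((2 - d) / 2)) 0 (frontier (ball (0 : E) 1)) := fun y hy ↦ by
    simp only [isotropicQuadratic_eq_of_norm_eq_one hsum (norm_eq_one hy), sub_self, Pi.zero_apply]
  have weight_boundary : EqOn (fun y : E ↦ (1 : ℝ) - ‖y‖ ^ 2) 0 (frontier (ball (0 : E) 1)) :=
    fun y hy ↦ by simp only [norm_eq_one hy, one_pow, sub_self, Pi.zero_apply]
  have green := setIntegral_mul_laplacian_comm (μ := μ) isBounded_ball
    (by rw [frontier_ball (0 : E) one_ne_zero, Measure.addHaar_sphere_of_ne_zero _ _ one_ne_zero])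
    ((contDiff_isotropicQuadratic_rpow hpos _).sub (contDiff_isotropicQuadratic_rpow hpos' _)) hw
    boundary weight_boundary
  simp_rw [laplacian_one_sub_norm_sq, d, laplacian_isotropicQuadratic_rpow_sub x _ hpos hpos',
    mul_left_comm _ (-((finrank ℝ E : ℝ) * (finrank ℝ E - 2)))] at green
  rw [integral_mul_const, integral_const_mul] at green
  apply mul_right_cancel₀ (neg_ne_zero.2 (mul_ne_zero two_ne_zero hd))
  refine green.trans ?_
  ring

end GreenIdentity

section ApproximateIdentity

lemma hasDerivAt_pow_mul_one_add_sq_rpow {n : ℕ} (hn : n ≠ 0) (r : ℝ) :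
    HasDerivAt (fun r : ℝ ↦ r ^ n * (1 + r ^ 2) ^ (-(n / 2 : ℝ)))
      (n * (r ^ (n - 1) * (1 + r ^ 2) ^ (-(n / 2 + 1 : ℝ)))) r := by
  have hpos : 0 < 1 + r ^ 2 := by positivity
  have hbase : HasDerivAt (fun r : ℝ ↦ 1 + r ^ 2) (2 * r) r := by
    simpa using (hasDerivAt_pow 2 r).const_add 1
  have hpow : r ^ n = r ^ (n - 1) * r := by rw [← pow_succ, Nat.sub_one_add_one hn]
  have hrpow : (1 + r ^ 2) ^ (-(n / 2 : ℝ)) =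
      (1 + r ^ 2) ^ (-(n / 2 + 1 : ℝ)) * (1 + r ^ 2) := by
    rw [← rpow_add_one hpos.ne']
    ring_nf
  refine ((hasDerivAt_pow n r).fun_mul (hbase.rpow_const (.inl hpos.ne'))).congr_deriv ?_
  rw [hpow, hrpow, show -(n / 2 : ℝ) - 1 = -(n / 2 + 1) by ring]
  ring

lemma tendsto_pow_mul_one_add_sq_rpow_atTop (n : ℕ) :
    Tendsto (fun r : ℝ ↦ r ^ n * (1 + r ^ 2) ^ (-(n / 2 : ℝ))) atTop (𝓝 1) := by
  have hinv : Tendsto (fun r : ℝ ↦ (r ^ 2)⁻¹ + 1) atTop (𝓝 1) := by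
    simpa using (tendsto_pow_atTop two_ne_zero).inv_tendsto_atTop.add_const (1 : ℝ)
  have hlim := hinv.rpow_const (p := -(n / 2 : ℝ)) (.inl one_ne_zero)
  rw [one_rpow] at hlim
  refine hlim.congr' ?_
  filter_upwards [eventually_gt_atTop 0] with r hr
  have hbase : (r ^ 2)⁻¹ + 1 = (r ^ 2)⁻¹ * (1 + r ^ 2) := by field_simp
  rw [hbase, mul_rpow (by positivity) (by positivity), inv_rpow (by positivity),
    rpow_neg (by positivity), inv_inv, ← rpow_natCast_mul hr.le, Nat.cast_ofNat,
    mul_div_cancel₀ _ two_ne_zero, rpow_natCast]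

lemma integral_Ioi_pow_mul_one_add_sq_rpow {n : ℕ} (hn : n ≠ 0) :
    (n : ℝ) * ∫ r in Ioi (0 : ℝ), r ^ (n - 1) * (1 + r ^ 2) ^ (-(n / 2 + 1 : ℝ)) = 1 := by
  rw [← integral_const_mul, integral_Ioi_of_hasDerivAt_of_nonneg'
    (fun r _ ↦ hasDerivAt_pow_mul_one_add_sq_rpow hn r)
    (fun r (hr : 0 < r) ↦ by positivity) (tendsto_pow_mul_one_add_sq_rpow_atTop n),
    zero_pow hn, zero_mul, sub_zero]

variable {E : Type*} [NormedAddCommGroup E]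

lemma tendsto_norm_pow_mul_one_add_norm_sq_rpow_cobounded (n : ℕ) :
    Tendsto (fun z : E ↦ ‖z‖ ^ n * (1 + ‖z‖ ^ 2) ^ (-(n / 2 + 1 : ℝ))) (cobounded E) (𝓝 0) := by
  have hsq : Tendsto (fun r : ℝ ↦ 1 + r ^ 2) atTop atTop :=
    tendsto_atTop_add_const_left _ _ (tendsto_pow_atTop two_ne_zero)
  have hlim : Tendsto (fun r : ℝ ↦ r ^ n * (1 + r ^ 2) ^ (-(n / 2 + 1 : ℝ))) atTop (𝓝 0) := by
    have := (tendsto_pow_mul_one_add_sq_rpow_atTop n).mul hsq.inv_tendsto_atTop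
    rw [mul_zero] at this
    refine this.congr fun r ↦ ?_
    have hpos : 0 < 1 + r ^ 2 := by positivity
    rw [neg_add, ← sub_eq_add_neg, rpow_sub_one hpos.ne', Pi.inv_apply, mul_assoc, ← div_eq_mul_inv]
  exact hlim.comp tendsto_norm_cobounded_atTop

variable [NormedSpace ℝ E]

lemma rpow_neg_half_pow_mul_one_add_norm_smul_sq_rpow {ε : ℝ} (hε : 0 < ε) (n : ℕ) (v : E) :
    (ε ^ (-(1 / 2) : ℝ)) ^ n * (1 + ‖ε ^ (-(1 / 2) : ℝ) • v‖ ^ 2) ^ (-(n / 2 + 1 : ℝ)) =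
      ε * (‖v‖ ^ 2 + ε) ^ (-(n / 2 + 1 : ℝ)) := by
  have hsq : (ε ^ (-(1 / 2) : ℝ)) ^ 2 = ε⁻¹ := by
    rw [← rpow_mul_natCast hε.le, ← rpow_neg_one]
    norm_num
  have hbase : 1 + ‖ε ^ (-(1 / 2) : ℝ) • v‖ ^ 2 = ε⁻¹ * (‖v‖ ^ 2 + ε) := by
    rw [norm_smul, mul_pow, norm_eq_abs, sq_abs, hsq]
    field_simp
    ring
  have hfactor : (ε ^ (-(1 / 2) : ℝ)) ^ n * ε⁻¹ ^ (-(n / 2 + 1 : ℝ)) = ε := by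
    rw [← rpow_mul_natCast hε.le, inv_rpow hε.le, rpow_neg hε.le, inv_inv, ← rpow_add hε]
    ring_nf
    exact rpow_one ε
  rw [hbase, mul_rpow (by positivity) (by positivity), ← mul_assoc, hfactor]

variable [FiniteDimensional ℝ E] [Nontrivial E] [MeasurableSpace E] [BorelSpace E]
  (μ : Measure E) [μ.IsAddHaarMeasure]

lemma integral_one_add_norm_sq_rpow :
    ∫ z : E, (1 + ‖z‖ ^ 2) ^ (-(finrank ℝ E / 2 + 1 : ℝ)) ∂μ = μ.real (ball 0 1) := by
  rw [integral_fun_norm_addHaar μ fun r : ℝ ↦ (1 + r ^ 2) ^ (-(finrank ℝ E / 2 + 1 : ℝ))]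
  simp only [nsmul_eq_mul, smul_eq_mul]
  rw [mul_left_comm, integral_Ioi_pow_mul_one_add_sq_rpow finrank_pos.ne', mul_one]

theorem tendsto_integral_mul_norm_sub_sq_add_rpow {g : E → ℝ} {x : E} (hg : Integrable g μ)
    (hgx : ContinuousAt g x) :
    Tendsto (fun ε ↦ ∫ y, g y * (ε * (‖x - y‖ ^ 2 + ε) ^ (-(finrank ℝ E / 2 + 1 : ℝ))) ∂μ)
      (𝓝[>] 0) (𝓝 (g x * μ.real (ball 0 1))) := by
  set ω := μ.real (ball (0 : E) 1)
  have hω : ω ≠ 0 :=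
    (measureReal_ne_zero_iff measure_ball_lt_top.ne).2 (measure_ball_pos μ 0 one_pos).ne'
  set φ : E → ℝ := fun z ↦ ω⁻¹ * (1 + ‖z‖ ^ 2) ^ (-(finrank ℝ E / 2 + 1 : ℝ))
  have integral_φ : ∫ z, φ z ∂μ = 1 := by
    rw [integral_const_mul, integral_one_add_norm_sq_rpow, inv_mul_cancel₀ hω]
  have decay_φ : Tendsto (fun z ↦ ‖z‖ ^ finrank ℝ E * φ z) (cobounded E) (𝓝 0) := by
    simpa only [mul_zero, φ, mul_left_comm] using
      (tendsto_norm_pow_mul_one_add_norm_sq_rpow_cobounded (E := E) (finrank ℝ E)).const_mul ω⁻¹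
  have hpeak := (tendsto_integral_comp_smul_smul_of_integrable' (fun z ↦ by positivity)
    integral_φ decay_φ hg hgx).comp (tendsto_rpow_neg_nhdsGT_zero (y := -(1 / 2)) (by norm_num))
  refine (hpeak.mul_const ω).congr' ?_
  filter_upwards [self_mem_nhdsWithin] with ε (hε : 0 < ε)
  rw [Function.comp_apply, ← integral_mul_const]
  congr with y
  rw [smul_eq_mul, mul_left_comm _ ω⁻¹, rpow_neg_half_pow_mul_one_add_norm_smul_sq_rpow hε]
  field_simp

lemma tendsto_setIntegral_mul_norm_sub_sq_add_rpow {g : E → ℝ} {s : Set E} {x : E}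
    (hs : MeasurableSet s) (hsx : s ∈ 𝓝 x) (hg : IntegrableOn g s μ) (hgx : ContinuousAt g x) :
    Tendsto (fun ε ↦ ∫ y in s, g y * (ε * (‖x - y‖ ^ 2 + ε) ^ (-(finrank ℝ E / 2 + 1 : ℝ))) ∂μ)
      (𝓝[>] 0) (𝓝 (g x * μ.real (ball 0 1))) := by
  have hgs : ContinuousAt (s.indicator g) x := by
    refine hgx.congr ?_
    filter_upwards [hsx] with y hy using (indicator_of_mem hy g).symm
  have hpeak := tendsto_integral_mul_norm_sub_sq_add_rpow μ (hg.integrable_indicator hs) hgs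
  rw [indicator_of_mem (mem_of_mem_nhds hsx)] at hpeak
  refine hpeak.congr fun ε ↦ ?_
  rw [← integral_indicator hs]
  congr with y
  exact (indicator_mul_left s g
    fun y ↦ ε * (‖x - y‖ ^ 2 + ε) ^ (-(finrank ℝ E / 2 + 1 : ℝ))).symm

end ApproximateIdentity

section PassageToTheLimit

lemma add_rpow_le_rpow_add_add_one_rpow {a ε : ℝ} (ha : 0 < a) (hε : ε ∈ Ioc (0 : ℝ) 1) (s : ℝ) :
    (a + ε) ^ s ≤ a ^ s + (a + 1) ^ s := by
  obtain ⟨hε₀, hε₁⟩ := hε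
  rcases le_total 0 s with hs | hs
  · calc
      (a + ε) ^ s ≤ (a + 1) ^ s := by gcongr
      _ ≤ a ^ s + (a + 1) ^ s := le_add_of_nonneg_left (by positivity)
  · calc
      (a + ε) ^ s ≤ a ^ s := rpow_le_rpow_of_nonpos ha (by linarith) hs
      _ ≤ a ^ s + (a + 1) ^ s := le_add_of_nonneg_right (by positivity)

lemma tendsto_integral_mul_add_rpow {X : Type*} [MeasurableSpace X] {μ : Measure X} {f q : X → ℝ}
    {s : ℝ} (hf : AEStronglyMeasurable f μ) (hq : AEMeasurable q μ) (hpos : ∀ᵐ y ∂μ, 0 < q y)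
    (hint : Integrable (fun y ↦ f y * q y ^ s) μ)
    (hint' : Integrable (fun y ↦ f y * (q y + 1) ^ s) μ) :
    Tendsto (fun ε ↦ ∫ y, f y * (q y + ε) ^ s ∂μ) (𝓝[>] 0) (𝓝 (∫ y, f y * q y ^ s ∂μ)) := by
  refine tendsto_integral_filter_of_dominated_convergence
    (fun y ↦ ‖f y * q y ^ s‖ + ‖f y * (q y + 1) ^ s‖)
    (.of_forall fun ε ↦ hf.mul ((hq.add_const ε).pow_const s).aestronglyMeasurable) ?_
    (hint.norm.add hint'.norm) ?_
  · filter_upwards [Ioc_mem_nhdsGT one_pos] with ε hε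
    filter_upwards [hpos] with y hy
    have hε₀ : 0 < ε := hε.1
    simp only [norm_mul, norm_of_nonneg (show 0 ≤ q y ^ s by positivity),
      norm_of_nonneg (show 0 ≤ (q y + ε) ^ s by positivity),
      norm_of_nonneg (show 0 ≤ (q y + 1) ^ s by positivity), ← mul_add]
    gcongr
    exact add_rpow_le_rpow_add_add_one_rpow hy hε s
  · filter_upwards [hpos] with y hy
    have hcont : ContinuousAt (fun ε ↦ f y * (q y + ε) ^ s) 0 :=
      continuousAt_const.mul <| (continuousAt_const.add continuousAt_id).rpow_const <|
        .inl (by simpa using hy.ne')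
    simpa using hcont.tendsto.mono_left nhdsWithin_le_nhds

variable {E : Type*} [NormedAddCommGroup E] [NormedSpace ℝ E] [FiniteDimensional ℝ E]
  [Nontrivial E] [MeasurableSpace E] [BorelSpace E] {μ : Measure E} [μ.IsAddHaarMeasure]

lemma integrableOn_norm_sub_rpow {s : ℝ} (hs : -finrank ℝ E < s) (x : E) {S : Set E}
    (hS : IsBounded S) : IntegrableOn (fun y ↦ ‖x - y‖ ^ s) S μ := by
  have hloc : LocallyIntegrable (fun z : E ↦ ‖z‖ ^ s) μ := by
    refine locallyIntegrable_of_norm_le_rpow (C := 1) (α := -s) finrank_pos (by linarith)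
      (.of_forall fun z ↦ ?_) (by fun_prop : Measurable fun z : E ↦ ‖z‖ ^ s).aestronglyMeasurable
    rw [norm_of_nonneg (by positivity), neg_neg, one_mul]
  obtain ⟨R, hR⟩ := hS.subset_closedBall x
  refine IntegrableOn.mono_set (t := (x - ·) ⁻¹' closedBall 0 R) ?_ fun y hy ↦ ?_
  · exact ((Measure.measurePreserving_sub_left μ x).integrableOn_comp_preimage
      (Homeomorph.subLeft x).measurableEmbedding).2
      (hloc.integrableOn_isCompact (isCompact_closedBall 0 R))
  · simpa [dist_eq_norm, norm_sub_rev x] using hR hy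

end PassageToTheLimit

section UnitBall

variable {E : Type*} [NormedAddCommGroup E] [InnerProductSpace ℝ E] [FiniteDimensional ℝ E]
  [MeasurableSpace E] [BorelSpace E] {μ : Measure E} [μ.IsAddHaarMeasure] {x : E}

lemma integrableOn_ball_mul_isotropicQuadratic_add_rpow (hx : ‖x‖ < 1) {f : E → ℝ}
    (hf : Continuous f) {ε : ℝ} (hε : 0 ≤ ε) (s : ℝ) :
    IntegrableOn (fun y ↦ f y * (isotropicQuadratic (‖x‖ ^ 2) 1 x y + ε) ^ s) (ball 0 1) μ := by
  have hq : Continuous (isotropicQuadratic (‖x‖ ^ 2) 1 x) :=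
    (contDiff_isotropicQuadratic (n := 0) _ _ x).continuous
  refine integrableOn_of_isBounded_of_continuousOn_closure isBounded_ball <|
    hf.continuousOn.mul <| (hq.add continuous_const).continuousOn.rpow_const fun y hy ↦ .inl ?_
  have hy : ‖y‖ ≤ 1 := by simpa using closure_ball_subset_closedBall hy
  exact (add_pos_of_pos_of_nonneg (isotropicQuadratic_norm_sq_one_pos hx hy) hε).ne'

lemma tendsto_setIntegral_ball_mul_isotropicQuadratic_add_rpow (hx : ‖x‖ < 1) {f : E → ℝ}
    (hf : Continuous f) (s : ℝ) :
    Tendsto (fun ε ↦ ∫ y in ball 0 1, f y * (isotropicQuadratic (‖x‖ ^ 2) 1 x y + ε) ^ s ∂μ)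
      (𝓝[>] 0) (𝓝 (∫ y in ball 0 1, f y * isotropicQuadratic (‖x‖ ^ 2) 1 x y ^ s ∂μ)) := by
  refine tendsto_integral_mul_add_rpow hf.aestronglyMeasurable
    (contDiff_isotropicQuadratic (n := 0) _ _ x).continuous.aemeasurable ?_ ?_
    (integrableOn_ball_mul_isotropicQuadratic_add_rpow hx hf zero_le_one s)
  · filter_upwards [ae_restrict_mem measurableSet_ball] with y hy
    exact isotropicQuadratic_norm_sq_one_pos hx (mem_ball_zero_iff.1 hy).le
  · simpa only [IntegrableOn, add_zero] using
      integrableOn_ball_mul_isotropicQuadratic_add_rpow (μ := μ) hx hf le_rfl s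

lemma integrableOn_ball_mul_norm_sub_sq_add_rpow (x : E) {f : E → ℝ} (hf : Continuous f) {ε : ℝ}
    (hε : 0 < ε) (s : ℝ) :
    IntegrableOn (fun y ↦ f y * (‖x - y‖ ^ 2 + ε) ^ s) (ball 0 1) μ :=
  integrableOn_of_isBounded_of_continuousOn_closure isBounded_ball <|
    (hf.mul <| (by fun_prop : Continuous fun y ↦ ‖x - y‖ ^ 2 + ε).rpow_const fun y ↦
      .inl (by positivity)).continuousOn

variable [Nontrivial E]

lemma tendsto_setIntegral_ball_norm_sub_sq_add_rpow (x : E) :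
    Tendsto (fun ε ↦ ∫ y in ball 0 1, (‖x - y‖ ^ 2 + ε) ^ ((2 - finrank ℝ E : ℝ) / 2) ∂μ)
      (𝓝[>] 0) (𝓝 (∫ y in ball 0 1, ‖x - y‖ ^ (2 - finrank ℝ E : ℝ) ∂μ)) := by
  have rpow_half (y : E) :
      (‖x - y‖ ^ 2) ^ ((2 - finrank ℝ E : ℝ) / 2) = ‖x - y‖ ^ (2 - finrank ℝ E : ℝ) := by
    rw [← rpow_natCast_mul (norm_nonneg _), Nat.cast_ofNat, mul_div_cancel₀ _ two_ne_zero]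
  have hpos : ∀ᵐ y ∂μ.restrict (ball 0 1), 0 < ‖x - y‖ ^ 2 := by
    filter_upwards [ae_restrict_of_ae (Measure.ae_ne μ x)] with y hy
    have : 0 < ‖x - y‖ := norm_pos_iff.2 (sub_ne_zero.2 hy.symm)
    positivity
  have newton : IntegrableOn (fun y ↦ ‖x - y‖ ^ (2 - finrank ℝ E : ℝ)) (ball 0 1) μ :=
    integrableOn_norm_sub_rpow (by linarith) x isBounded_ball
  simpa only [one_mul, rpow_half] using
    tendsto_integral_mul_add_rpow (f := fun _ ↦ 1) (s := (2 - finrank ℝ E : ℝ) / 2)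
      aestronglyMeasurable_const
      (by fun_prop : Measurable fun y ↦ ‖x - y‖ ^ 2).aemeasurable hpos
      (by simpa only [IntegrableOn, one_mul, rpow_half] using newton)
      (integrableOn_ball_mul_norm_sub_sq_add_rpow x continuous_const one_pos _)

lemma setIntegral_ball_regularized_green_identity (hx : ‖x‖ < 1) {ε : ℝ} (hε : 0 < ε) :
    ∫ y in ball 0 1, (‖x - y‖ ^ 2 + ε) ^ ((2 - finrank ℝ E : ℝ) / 2) ∂μ -
        ∫ y in ball 0 1,
          (isotropicQuadratic (‖x‖ ^ 2) 1 x y + ε) ^ ((2 - finrank ℝ E : ℝ) / 2) ∂μ =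
      (finrank ℝ E - 2 : ℝ) / 2 *
        (∫ y in ball 0 1,
            (1 - ‖y‖ ^ 2) * (ε * (‖x - y‖ ^ 2 + ε) ^ (-(finrank ℝ E / 2 + 1 : ℝ))) ∂μ -
          ‖x‖ ^ 2 * ε * ∫ y in ball 0 1, (1 - ‖y‖ ^ 2) *
            (isotropicQuadratic (‖x‖ ^ 2) 1 x y + ε) ^ (-(finrank ℝ E / 2 + 1 : ℝ)) ∂μ) := by
  have hnewton (y : E) : isotropicQuadratic 1 (‖x‖ ^ 2 + ε) x y = ‖x - y‖ ^ 2 + ε := by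
    rw [isotropicQuadratic_add_const, isotropicQuadratic_one_norm_sq]
  have hkelvin (y : E) : 0 < isotropicQuadratic (‖x‖ ^ 2) 1 x y + ε :=
    add_pos_of_nonneg_of_pos
      ((sq_nonneg _).trans (sq_one_sub_norm_mul_norm_le_isotropicQuadratic x y)) hε
  have green := setIntegral_ball_isotropicQuadratic_rpow_sub (μ := μ) (α := 1) (γ := ‖x‖ ^ 2 + ε)
    (α' := ‖x‖ ^ 2) (γ' := 1 + ε) x (by ring)
    (fun y ↦ by rw [hnewton]; positivity)
    (fun y ↦ by rw [isotropicQuadratic_add_const]; exact hkelvin y)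
  simp only [hnewton, isotropicQuadratic_add_const (‖x‖ ^ 2) 1] at green
  have hw : Continuous fun y : E ↦ (1 : ℝ) - ‖y‖ ^ 2 := by fun_prop
  have newton := integrableOn_ball_mul_norm_sub_sq_add_rpow (μ := μ) (f := fun _ ↦ 1) x
    continuous_const hε ((2 - finrank ℝ E : ℝ) / 2)
  have kelvin := integrableOn_ball_mul_isotropicQuadratic_add_rpow (μ := μ) (f := fun _ ↦ 1) hx
    continuous_const hε.le ((2 - finrank ℝ E : ℝ) / 2)
  simp only [one_mul] at newton kelvin
  rw [← integral_sub newton kelvin,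
    green, ← integral_const_mul (‖x‖ ^ 2 * ε), ← integral_sub
    (by simpa only [mul_left_comm _ ε] using
      (integrableOn_ball_mul_norm_sub_sq_add_rpow x hw hε _).const_mul ε)
    ((integrableOn_ball_mul_isotropicQuadratic_add_rpow hx hw hε.le _).const_mul _)]
  congr with y
  ring

theorem setIntegral_ball_norm_sub_rpow_sub_rpow (hx : ‖x‖ < 1) :
    ∫ y in ball (0 : E) 1, (‖x - y‖ ^ (2 - finrank ℝ E : ℝ) -
        (‖x‖ ^ 2 * ‖y‖ ^ 2 + 1 - 2 * ⟪x, y⟫) ^ ((2 - finrank ℝ E : ℝ) / 2)) ∂μ =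
      (finrank ℝ E - 2 : ℝ) / 2 * ((1 - ‖x‖ ^ 2) * μ.real (ball (0 : E) 1)) := by
  have hw : Continuous fun y : E ↦ (1 : ℝ) - ‖y‖ ^ 2 := by fun_prop
  have newton := tendsto_setIntegral_ball_norm_sub_sq_add_rpow (μ := μ) x
  have kelvin := tendsto_setIntegral_ball_mul_isotropicQuadratic_add_rpow (μ := μ)
    (f := fun _ ↦ 1) hx continuous_const ((2 - finrank ℝ E : ℝ) / 2)
  have peak := tendsto_setIntegral_mul_norm_sub_sq_add_rpow μ measurableSet_ball
    (isOpen_ball.mem_nhds (mem_ball_zero_iff.2 hx))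
    (integrableOn_of_isBounded_of_continuousOn_closure isBounded_ball hw.continuousOn)
    hw.continuousAt
  have remainder : Tendsto (fun ε ↦ ‖x‖ ^ 2 * ε * ∫ y in ball 0 1, (1 - ‖y‖ ^ 2) *
      (isotropicQuadratic (‖x‖ ^ 2) 1 x y + ε) ^ (-(finrank ℝ E / 2 + 1 : ℝ)) ∂μ)
      (𝓝[>] 0) (𝓝 0) := by
    have hε : Tendsto (fun ε : ℝ ↦ ‖x‖ ^ 2 * ε) (𝓝[>] 0) (𝓝 (‖x‖ ^ 2 * 0)) :=
      (tendsto_id.mono_left nhdsWithin_le_nhds).const_mul _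
    simpa only [mul_zero, zero_mul] using
      hε.mul (tendsto_setIntegral_ball_mul_isotropicQuadratic_add_rpow (μ := μ) hx hw _)
  simp only [one_mul] at kelvin
  have limits := tendsto_nhds_unique_of_eventuallyEq (newton.sub kelvin)
    ((peak.sub remainder).const_mul ((finrank ℝ E - 2 : ℝ) / 2)) <| by
      filter_upwards [self_mem_nhdsWithin] with ε hε
      exact setIntegral_ball_regularized_green_identity hx hε
  rw [sub_zero] at limits
  rw [← limits]
  have integrableOn_kelvin := integrableOn_ball_mul_isotropicQuadratic_add_rpow (μ := μ)
    (f := fun _ ↦ 1) hx continuous_const le_rfl ((2 - finrank ℝ E : ℝ) / 2)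
  simp only [one_mul, add_zero] at integrableOn_kelvin
  exact integral_sub (integrableOn_norm_sub_rpow (by linarith) x isBounded_ball)
    integrableOn_kelvin

end UnitBall

section GreenFunction

variable {E : Type*} [NormedAddCommGroup E] [InnerProductSpace ℝ E] [FiniteDimensional ℝ E]
  [MeasurableSpace E] [BorelSpace E]

/-- The coordinate-free form of `greenFn`: the Dirichlet Green function of `-Δ` on the unit ball
of a finite-dimensional real inner product space. In dimension `2`, where the kernel is
logarithmic, this formula gives the junk value `0`. -/
noncomputable def ballGreenFn (x y : E) : ℝ :=
  1 / (finrank ℝ E * (finrank ℝ E - 2 : ℝ) * volume.real (ball (0 : E) 1)) *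
    (‖x - y‖ ^ (2 - finrank ℝ E : ℝ) -
      (‖x‖ ^ 2 * ‖y‖ ^ 2 + 1 - 2 * ⟪x, y⟫) ^ ((2 - finrank ℝ E : ℝ) / 2))

theorem integral_greenFn_general [Nontrivial E] (hd : finrank ℝ E ≠ 2) {x : E}
    (hx : x ∈ ball (0 : E) 1) :
    ∫ y in ball 0 1, ballGreenFn x y = (1 - ‖x‖ ^ 2) / (2 * finrank ℝ E) := by
  have hd₀ : (finrank ℝ E : ℝ) ≠ 0 := Nat.cast_ne_zero.2 finrank_pos.ne'
  have hd₂ : (finrank ℝ E - 2 : ℝ) ≠ 0 := sub_ne_zero.2 (by exact_mod_cast hd)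
  have hω : volume.real (ball (0 : E) 1) ≠ 0 :=
    (measureReal_ne_zero_iff measure_ball_lt_top.ne).2 (measure_ball_pos volume 0 one_pos).ne'
  unfold ballGreenFn
  rw [integral_const_mul, setIntegral_ball_norm_sub_rpow_sub_rpow (mem_ball_zero_iff.1 hx)]
  field_simp

end GreenFunction

/-- For every `x` in the unit ball `B` of `ℝⁿ`, `n ≥ 3`,
`∫_B G(x, y) dy = (1 - |x|²)/(2n)`. -/
theorem integral_greenFn (n : ℕ) (hn : 3 ≤ n) :
    ∀ x ∈ ball (0 : EuclideanSpace ℝ (Fin n)) 1,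
      ∫ y in ball (0 : EuclideanSpace ℝ (Fin n)) 1, greenFn n x y
        = (1 - ‖x‖ ^ 2) / (2 * n) := by
  intro x hx
  have hrank : finrank ℝ (EuclideanSpace ℝ (Fin n)) = n := finrank_euclideanSpace_fin
  have : Nontrivial (EuclideanSpace ℝ (Fin n)) :=
    nontrivial_of_finrank_pos (R := ℝ) (by rw [hrank]; lia)
  simpa only [greenFn, unitBallVol, ballGreenFn, measureReal_def, hrank] using
    integral_greenFn_general (by rw [hrank]; lia) hx
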